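/- Let A = diag(Ni/(N+1), −(i/(N+1)) I_N) ∈ su(N+1) and let 𝐪 : ℝ² → ℂ^N be a smooth row-vector-valued function of (x,t); set q := ⟦𝐪⟧ : ℝ² → su(N+1). Then q satisfies the Fordy–Kulish NLS flow (1/(2N)) ∂_t q = −[A, ∂_x² q] + (1/2)[q,[q,[A,q]]] if and only if 𝐪 satisfies the U(N)-invariant vector NLS equation (1/(2N)) ∂_t 𝐪 = −i(∂_x² 𝐪 + 2(𝐪̄·𝐪)𝐪). In particular, [⟦𝐪⟧, [⟦𝐪⟧, [A, ⟦𝐪⟧]]] = ⟦−4i(𝐪̄·𝐪)𝐪⟧. -/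

import Mathlib

open Matrix

attribute [local instance]
  Matrix.linftyOpNormedAddCommGroup Matrix.linftyOpNormedSpace
  Matrix.linftyOpNormedRing Matrix.linftyOpNormedAlgebra

/-- The embedding of a row vector `a ∈ ℂ^N` as the su(N+1) matrix
`⟦a⟧ = [[0, a],[−āᵀ, 0]]`. -/
noncomputable def mE {N : ℕ} (a : Fin N → ℂ) :
    Matrix (Fin 1 ⊕ Fin N) (Fin 1 ⊕ Fin N) ℂ :=
  Matrix.fromBlocks 0 (Matrix.of fun _ j => a j)
    (Matrix.of fun i _ => -(starRingEnd ℂ) (a i)) 0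

/-- The distinguished element `A = diag(Ni/(N+1), −(i/(N+1)) I_N)` of su(N+1). -/
noncomputable def Amat (N : ℕ) :
    Matrix (Fin 1 ⊕ Fin N) (Fin 1 ⊕ Fin N) ℂ :=
  Matrix.fromBlocks (Matrix.of fun _ _ => (N : ℂ) * Complex.I / ((N : ℂ) + 1)) 0 0
    ((-Complex.I / ((N : ℂ) + 1)) • (1 : Matrix (Fin N) (Fin N) ℂ))

/-- The Hermitian dot product `ā·b = Σ_k ā_k b_k` on `ℂ^N`. -/
noncomputable def dotc {N : ℕ} (a b : Fin N → ℂ) : ℂ :=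
  ∑ k, (starRingEnd ℂ) (a k) * b k

/-!
Matrices in `(1 + N) × (1 + N)` block form split into block-diagonal and block-off-diagonal ones,
and the commutator respects this `ℤ/2`-grading. The image of `a ↦ ⟦a⟧` consists of the
skew-Hermitian off-diagonal matrices, so it is closed under triple commutators, which evaluate to
`[⟦a⟧, [⟦b⟧, ⟦c⟧]] = ⟦(c̄·a) b - (b̄·a) c - (b̄·c - c̄·b) a⟧`, up to sign the curvature of `ℂPᴺ`,
while `ad A` acts on it as the complex structure `⟦a⟧ ↦ ⟦i a⟧`. With `a = b` and `c = i a` the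
triple commutator is `⟦-4i (ā·a) a⟧`. As `a ↦ ⟦a⟧` is real-linear and injective, it commutes with
differentiation and can be cancelled.
-/

section BlockCommutators

variable {m n R : Type*} [Fintype m] [Fintype n] [NonUnitalNonAssocRing R]

theorem lie_fromBlocks_diagonal_offDiagonal (P : Matrix m m R) (S : Matrix n n R)
    (B : Matrix m n R) (C : Matrix n m R) :
    ⁅fromBlocks P 0 0 S, fromBlocks 0 B C 0⁆ =
      fromBlocks 0 (P * B - B * S) (S * C - C * P) 0 := by
  simp [Ring.lie_def, fromBlocks_multiply, sub_eq_add_neg, fromBlocks_neg, fromBlocks_add]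

theorem lie_fromBlocks_offDiagonal_diagonal (B : Matrix m n R) (C : Matrix n m R)
    (P : Matrix m m R) (S : Matrix n n R) :
    ⁅fromBlocks 0 B C 0, fromBlocks P 0 0 S⁆ =
      fromBlocks 0 (B * S - P * B) (C * P - S * C) 0 := by
  simp [Ring.lie_def, fromBlocks_multiply, sub_eq_add_neg, fromBlocks_neg, fromBlocks_add]

theorem lie_fromBlocks_offDiagonal_offDiagonal (B B' : Matrix m n R) (C C' : Matrix n m R) :
    ⁅fromBlocks 0 B C 0, fromBlocks 0 B' C' 0⁆ =
      fromBlocks (B * C' - B' * C) 0 0 (C * B' - C' * B) := by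
  simp [Ring.lie_def, fromBlocks_multiply, sub_eq_add_neg, fromBlocks_neg, fromBlocks_add]

end BlockCommutators

section HermitianProduct

variable {N : ℕ}

theorem dotProduct_star_eq_dotc (a b : Fin N → ℂ) : a ⬝ᵥ star b = dotc b a :=
  dotProduct_comm a (star b)

theorem conj_dotc (a b : Fin N → ℂ) : starRingEnd ℂ (dotc a b) = dotc b a :=
  (star_dotProduct b a).symm

theorem dotc_smul (z : ℂ) (a b : Fin N → ℂ) : dotc a (z • b) = z * dotc a b :=
  dotProduct_smul z (star a) b

theorem smul_dotc (z : ℂ) (a b : Fin N → ℂ) : dotc (z • a) b = starRingEnd ℂ z * dotc a b := by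
  rw [← conj_dotc, dotc_smul, map_mul, conj_dotc]

end HermitianProduct

section Embedding

variable {N : ℕ}

/-- The embedding `a ↦ ⟦a⟧` as a linear map. The scalars are real because the lower left block of
`⟦a⟧` is conjugate-linear in `a`. -/
noncomputable def mELinearMap (N : ℕ) :
    (Fin N → ℂ) →ₗ[ℝ] Matrix (Fin 1 ⊕ Fin N) (Fin 1 ⊕ Fin N) ℂ where
  toFun := mE
  map_add' a b := by
    ext (i | i) (j | j) <;> simp [mE, add_comm]
  map_smul' r a := by
    ext (i | i) (j | j) <;> simp [mE]

theorem mE_add (a b : Fin N → ℂ) : mE (a + b) = mE a + mE b :=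
  (mELinearMap N).map_add a b

theorem mE_neg (a : Fin N → ℂ) : mE (-a) = -mE a :=
  (mELinearMap N).map_neg a

theorem mE_smul (r : ℝ) (a : Fin N → ℂ) : mE (r • a) = r • mE a :=
  (mELinearMap N).map_smul r a

theorem mE_injective : Function.Injective (mE (N := N)) := by
  intro a b h
  funext j
  exact congrFun₂ h (Sum.inl 0) (Sum.inr j)

theorem deriv_mE {f : ℝ → Fin N → ℂ} {t : ℝ} (hf : DifferentiableAt ℝ f t) :
    deriv (fun s => mE (f s)) t = mE (deriv f t) :=
  ((mELinearMap N).toContinuousLinearMap.hasFDerivAt.comp_hasDerivAt t hf.hasDerivAt).deriv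

theorem deriv_deriv_mE {f : ℝ → Fin N → ℂ} {x : ℝ} (hf : Differentiable ℝ f)
    (hf' : DifferentiableAt ℝ (deriv f) x) :
    deriv (fun y => deriv (fun z => mE (f z)) y) x = mE (deriv (deriv f) x) := by
  simp only [fun y => deriv_mE (hf y), deriv_mE hf']

theorem mE_eq_fromBlocks_replicate (a : Fin N → ℂ) :
    mE a = fromBlocks 0 (replicateRow (Fin 1) a) (-replicateCol (Fin 1) (star a)) 0 := rfl

end Embedding

section Commutators

variable {N : ℕ}

theorem Amat_eq_fromBlocks_smul_one (N : ℕ) :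
    Amat N = fromBlocks (((N : ℂ) * Complex.I / (N + 1)) • (1 : Matrix (Fin 1) (Fin 1) ℂ)) 0 0
      ((-Complex.I / (N + 1)) • (1 : Matrix (Fin N) (Fin N) ℂ)) := by
  rw [Amat]
  congr 1
  ext i j
  simp [Subsingleton.elim i j]

theorem lie_Amat_mE (a : Fin N → ℂ) : ⁅Amat N, mE a⁆ = mE (Complex.I • a) := by
  have eigenvalue_gap :
      (N : ℂ) * Complex.I / (N + 1) - -Complex.I / (N + 1) = Complex.I := by
    have := Nat.cast_add_one_ne_zero (R := ℂ) N
    field_simp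
    ring
  rw [Amat_eq_fromBlocks_smul_one, mE_eq_fromBlocks_replicate, mE_eq_fromBlocks_replicate,
    lie_fromBlocks_diagonal_offDiagonal]
  congr 1
  · rw [Matrix.smul_mul, Matrix.mul_smul, Matrix.one_mul, Matrix.mul_one, ← sub_smul,
      eigenvalue_gap, replicateRow_smul]
  · rw [Matrix.smul_mul, Matrix.mul_smul, Matrix.one_mul, Matrix.mul_one, ← sub_smul,
      ← neg_sub, eigenvalue_gap, star_smul, replicateCol_smul]
    simp

theorem lie_mE_mE (a b : Fin N → ℂ) :
    ⁅mE a, mE b⁆ = fromBlocks ((dotc a b - dotc b a) • (1 : Matrix (Fin 1) (Fin 1) ℂ)) 0 0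
      (vecMulVec (star b) a - vecMulVec (star a) b) := by
  rw [mE_eq_fromBlocks_replicate, mE_eq_fromBlocks_replicate,
    lie_fromBlocks_offDiagonal_offDiagonal]
  congr 1
  · ext i j
    simp [Subsingleton.elim i j, dotProduct_star_eq_dotc, neg_add_eq_sub]
  · ext i j
    simp [Matrix.mul_apply, vecMulVec_apply, neg_add_eq_sub]

theorem lie_mE_lie_mE_mE (a b c : Fin N → ℂ) :
    ⁅mE a, ⁅mE b, mE c⁆⁆ =
      mE (dotc c a • b - dotc b a • c - (dotc b c - dotc c b) • a) := by
  rw [lie_mE_mE, mE_eq_fromBlocks_replicate, mE_eq_fromBlocks_replicate,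
    lie_fromBlocks_offDiagonal_diagonal]
  congr 1
  · rw [Matrix.smul_mul, Matrix.one_mul, ← replicateRow_vecMul, vecMul_sub, vecMul_vecMulVec,
      vecMul_vecMulVec]
    ext i j
    simp [dotProduct_star_eq_dotc]
  · rw [Matrix.mul_smul, Matrix.mul_one, Matrix.mul_neg, ← replicateCol_mulVec, sub_mulVec,
      vecMulVec_mulVec, vecMulVec_mulVec]
    ext i j
    simp only [dotProduct_star_eq_dotc, conj_dotc, op_smul_eq_smul, smul_neg, star_sub, star_smul,
      RCLike.star_def, Matrix.sub_apply, Matrix.neg_apply, Matrix.smul_apply, replicateCol_apply,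
      Pi.sub_apply, Pi.smul_apply, Pi.star_apply, smul_eq_mul]
    ring

theorem lie_mE_lie_mE_lie_Amat_mE (a : Fin N → ℂ) :
    ⁅mE a, ⁅mE a, ⁅Amat N, mE a⁆⁆⁆ = mE ((-4 * Complex.I * dotc a a) • a) := by
  rw [lie_Amat_mE, lie_mE_lie_mE_mE, dotc_smul, smul_dotc, smul_smul, ← sub_smul, ← sub_smul]
  congr 2
  rw [Complex.conj_I]
  ring

theorem smul_mE_eq_fordyKulish_iff (κ : ℝ) (u ut uxx : Fin N → ℂ) :
    κ • mE ut = -⁅Amat N, mE uxx⁆ + (1 / 2 : ℝ) • ⁅mE u, ⁅mE u, ⁅Amat N, mE u⁆⁆⁆ ↔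
      κ • ut = -Complex.I • (uxx + (2 * dotc u u) • u) := by
  have rhs_eq : -(Complex.I • uxx) + (1 / 2 : ℝ) • (-4 * Complex.I * dotc u u) • u =
      -Complex.I • (uxx + (2 * dotc u u) • u) := by
    module
  rw [lie_mE_lie_mE_lie_Amat_mE, lie_Amat_mE, ← mE_smul, ← mE_smul, ← mE_neg, ← mE_add,
    mE_injective.eq_iff, rhs_eq]

end Commutators

theorem su_vector_NLS_correspondence_general {N : ℕ} (κ : ℝ) (qv : ℝ → ℝ → Fin N → ℂ)
    (ht : ∀ x, Differentiable ℝ (fun t => qv x t))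
    (hx : ∀ t, Differentiable ℝ (fun x => qv x t))
    (hxx : ∀ t, Differentiable ℝ (deriv fun x => qv x t)) :
    ((∀ x t : ℝ,
        κ • deriv (fun t' => mE (qv x t')) t
          = -⁅Amat N, deriv (fun x' => deriv (fun x'' => mE (qv x'' t)) x') x⁆
            + (1/2 : ℝ) •
                ⁅mE (qv x t), ⁅mE (qv x t), ⁅Amat N, mE (qv x t)⁆⁆⁆)
      ↔
      (∀ x t : ℝ,
        κ • deriv (fun t' => qv x t') t
          = -Complex.I • (deriv (fun x' => deriv (fun x'' => qv x'' t) x') x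
              + (2 * dotc (qv x t) (qv x t)) • qv x t))) ∧
    (∀ x t : ℝ,
      ⁅mE (qv x t), ⁅mE (qv x t), ⁅Amat N, mE (qv x t)⁆⁆⁆
        = mE ((-4 * Complex.I * dotc (qv x t) (qv x t)) • qv x t)) := by
  refine ⟨forall₂_congr fun x t => ?_, fun x t => lie_mE_lie_mE_lie_Amat_mE (qv x t)⟩
  rw [deriv_mE (ht x t), deriv_deriv_mE (hx t) (hxx t x)]
  exact smul_mE_eq_fordyKulish_iff κ _ _ _

/-- `q = ⟦qv⟧` satisfies the Fordy–Kulish NLS flow iff `qv`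
satisfies the U(N)-invariant vector NLS equation; in particular
`[⟦qv⟧,[⟦qv⟧,[A,⟦qv⟧]]] = ⟦−4i(qv̄·qv)qv⟧`. -/
theorem su_vector_NLS_correspondence {N : ℕ}
    (qv : ℝ → ℝ → Fin N → ℂ)
    (hsm : ContDiff ℝ (⊤ : ℕ∞) (fun p : ℝ × ℝ => qv p.1 p.2)) :
    ((∀ x t : ℝ,
        (1 / (2 * (N : ℝ))) • deriv (fun t' => mE (qv x t')) t
          = -⁅Amat N, deriv (fun x' => deriv (fun x'' => mE (qv x'' t)) x') x⁆
            + (1/2 : ℝ) •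
                ⁅mE (qv x t), ⁅mE (qv x t), ⁅Amat N, mE (qv x t)⁆⁆⁆)
      ↔
      (∀ x t : ℝ,
        (1 / (2 * (N : ℝ))) • deriv (fun t' => qv x t') t
          = -Complex.I • (deriv (fun x' => deriv (fun x'' => qv x'' t) x') x
              + (2 * dotc (qv x t) (qv x t)) • qv x t))) ∧
    (∀ x t : ℝ,
      ⁅mE (qv x t), ⁅mE (qv x t), ⁅Amat N, mE (qv x t)⁆⁆⁆
        = mE ((-4 * Complex.I * dotc (qv x t) (qv x t)) • qv x t)) := by
  have hx (t : ℝ) : ContDiff ℝ (⊤ : ℕ∞) (fun x => qv x t) := hsm.comp (contDiff_prodMk_left t)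
  exact su_vector_NLS_correspondence_general _ qv
    (fun x => (hsm.comp (contDiff_prodMk_right x)).differentiable (by simp))
    (fun t => (hx t).differentiable (by simp))
    (fun t => (contDiff_infty_iff_deriv.mp (hx t)).2.differentiable (by simp))
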